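/- Let L₁, L₂ > 0 and let Ω = (0, L₁) × (0, L₂) ⊆ ℝ². Then for every continuously differentiable function f : ℝ² → ℝ with ∫_Ω f(x) dx = 0, one has ∫_Ω f(x)² dx ≤ (max(L₁, L₂)/π)² · ∫_Ω |∇f(x)|² dx, where |∇f| denotes the Euclidean norm of the gradient. -/

import Mathlib

open MeasureTheory

/-- The open rectangle `(0, L₁) × (0, L₂)` in `ℝ²`. -/
def rect (L₁ L₂ : ℝ) : Set (EuclideanSpace ℝ (Fin 2)) :=
  {x | x 0 ∈ Set.Ioo 0 L₁ ∧ x 1 ∈ Set.Ioo 0 L₂}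

/-!
On an interval of length `ℓ` the sharp inequality is first proved for functions vanishing at both
ends: for `k ℓ < π` the function `p x = k tan (k (x - c))`, with `c` the midpoint, solves the
Riccati equation `p' = k² + p²` on the whole closed interval, and completing the square gives
`k² ∫ u² ≤ ∫ u'²`; then `k → π / ℓ`. A mean-zero `u` has a primitive `U` vanishing at both ends, and
`∫ u² = -∫ U u'`, so the inequality for `U` implies the one for `u` with the same constant.

The rectangle follows by tensorization. The variance for a product of probability measures is at
most the sum of the averaged variances in each variable (Efron–Stein), and each of these is bounded
by the one-dimensional inequality.
-/

open ProbabilityTheory Set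

section Interval

variable {u u' : ℝ → ℝ} {a b : ℝ}

/- The integrand of `∫ (u' + p u)² ≥ 0` is `u'² - q u² + (p u²)'`, and `p u²` vanishes at both
ends. -/
theorem integral_mul_sq_le_integral_deriv_sq_of_riccati {p q : ℝ → ℝ} (hab : a ≤ b)
    (hu : ContinuousOn u (Icc a b)) (hu' : ContinuousOn u' (Icc a b))
    (huu' : ∀ x ∈ Ioo a b, HasDerivAt u (u' x) x) (hua : u a = 0) (hub : u b = 0)
    (hp : ContinuousOn p (Icc a b)) (hq : ContinuousOn q (Icc a b))
    (hpq : ∀ x ∈ Ioo a b, HasDerivAt p (q x + p x ^ 2) x) :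
    ∫ x in a..b, q x * u x ^ 2 ≤ ∫ x in a..b, u' x ^ 2 := by
  have intervalIntegrable {g : ℝ → ℝ} (hg : ContinuousOn g (Icc a b)) :
      IntervalIntegrable g volume a b := hg.intervalIntegrable_of_Icc hab
  have boundary :
      ∫ x in a..b, ((q x + p x ^ 2) * u x ^ 2 + p x * (2 * u x * u' x)) = 0 := by
    rw [intervalIntegral.integral_eq_sub_of_hasDerivAt_of_le hab
      (f := fun x ↦ p x * u x ^ 2) (by fun_prop) _ (intervalIntegrable (by fun_prop))]
    · simp [hua, hub]
    · intro x hx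
      simpa using (hpq x hx).fun_mul ((huu' x hx).fun_pow 2)
  have square_nonneg : 0 ≤ ∫ x in a..b, (u' x + p x * u x) ^ 2 :=
    intervalIntegral.integral_nonneg hab fun x _ ↦ sq_nonneg _
  have expand : ∫ x in a..b, (u' x + p x * u x) ^ 2 =
      (∫ x in a..b, u' x ^ 2) - (∫ x in a..b, q x * u x ^ 2) +
        ∫ x in a..b, ((q x + p x ^ 2) * u x ^ 2 + p x * (2 * u x * u' x)) := by
    rw [← intervalIntegral.integral_sub (intervalIntegrable (by fun_prop))
        (intervalIntegrable (by fun_prop)),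
      ← intervalIntegral.integral_add (intervalIntegrable (by fun_prop))
        (intervalIntegrable (by fun_prop))]
    congr with x
    ring
  linarith

theorem hasDerivAt_mul_tan_mul_sub {k c x : ℝ} (hcos : Real.cos (k * (x - c)) ≠ 0) :
    HasDerivAt (fun x ↦ k * Real.tan (k * (x - c)))
      (k ^ 2 + (k * Real.tan (k * (x - c))) ^ 2) x := by
  have inner : HasDerivAt (fun x ↦ k * (x - c)) k x := by
    simpa using ((hasDerivAt_id x).sub_const c).const_mul k
  refine (((Real.hasDerivAt_tan hcos).comp x inner).const_mul k).congr_deriv ?_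
  rw [← Real.inv_one_add_tan_sq hcos]
  field_simp

theorem sq_mul_integral_sq_le_integral_deriv_sq {k : ℝ} (hab : a ≤ b) (hk : 0 ≤ k)
    (hkab : k * (b - a) < Real.pi)
    (hu : ContinuousOn u (Icc a b)) (hu' : ContinuousOn u' (Icc a b))
    (huu' : ∀ x ∈ Ioo a b, HasDerivAt u (u' x) x) (hua : u a = 0) (hub : u b = 0) :
    k ^ 2 * ∫ x in a..b, u x ^ 2 ≤ ∫ x in a..b, u' x ^ 2 := by
  have cos_ne_zero : ∀ x ∈ Icc a b, Real.cos (k * (x - (a + b) / 2)) ≠ 0 := fun x hx ↦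
    (Real.cos_pos_of_mem_Ioo ⟨by nlinarith [hx.1], by nlinarith [hx.2]⟩).ne'
  rw [← intervalIntegral.integral_const_mul]
  exact integral_mul_sq_le_integral_deriv_sq_of_riccati hab hu hu' huu' hua hub
    (fun x hx ↦ (hasDerivAt_mul_tan_mul_sub (cos_ne_zero x hx)).continuousAt.continuousWithinAt)
    continuousOn_const
    (fun x hx ↦ hasDerivAt_mul_tan_mul_sub (cos_ne_zero x (Ioo_subset_Icc_self hx)))

theorem integral_sq_le_integral_deriv_sq_of_eq_zero (hab : a < b)
    (hu : ContinuousOn u (Icc a b)) (hu' : ContinuousOn u' (Icc a b))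
    (huu' : ∀ x ∈ Ioo a b, HasDerivAt u (u' x) x) (hua : u a = 0) (hub : u b = 0) :
    ∫ x in a..b, u x ^ 2 ≤ ((b - a) / Real.pi) ^ 2 * ∫ x in a..b, u' x ^ 2 := by
  have hlen : 0 < b - a := sub_pos.2 hab
  have subcritical : ∀ k ∈ Ioo 0 (Real.pi / (b - a)),
      k ^ 2 * ∫ x in a..b, u x ^ 2 ≤ ∫ x in a..b, u' x ^ 2 := fun k hk ↦
    sq_mul_integral_sq_le_integral_deriv_sq hab.le hk.1.le ((lt_div_iff₀ hlen).1 hk.2)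
      hu hu' huu' hua hub
  have critical : (Real.pi / (b - a)) ^ 2 * ∫ x in a..b, u x ^ 2 ≤ ∫ x in a..b, u' x ^ 2 :=
    le_of_tendsto (f := fun k : ℝ ↦ k ^ 2 * ∫ x in a..b, u x ^ 2)
      (Continuous.continuousWithinAt (by fun_prop))
      (Filter.eventually_of_mem (Ioo_mem_nhdsLT (div_pos Real.pi_pos hlen)) subcritical)
  calc ∫ x in a..b, u x ^ 2
      = ((b - a) / Real.pi) ^ 2 * ((Real.pi / (b - a)) ^ 2 * ∫ x in a..b, u x ^ 2) := by
        field_simp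
    _ ≤ ((b - a) / Real.pi) ^ 2 * ∫ x in a..b, u' x ^ 2 := by gcongr

theorem integral_sq_le_mul_integral_deriv_sq_of_primitive {U : ℝ → ℝ} {C : ℝ} (hab : a ≤ b)
    (hC : 0 < C) (hU : ContinuousOn U (Icc a b)) (hu : ContinuousOn u (Icc a b))
    (hu' : ContinuousOn u' (Icc a b)) (hUu : ∀ x ∈ Ioo a b, HasDerivAt U (u x) x)
    (huu' : ∀ x ∈ Ioo a b, HasDerivAt u (u' x) x) (hUa : U a = 0) (hUb : U b = 0)
    (hCU : ∫ x in a..b, U x ^ 2 ≤ C * ∫ x in a..b, u x ^ 2) :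
    ∫ x in a..b, u x ^ 2 ≤ C * ∫ x in a..b, u' x ^ 2 := by
  have intervalIntegrable {g : ℝ → ℝ} (hg : ContinuousOn g (Icc a b)) :
      IntervalIntegrable g volume a b := hg.intervalIntegrable_of_Icc hab
  have by_parts : ∫ x in a..b, U x * u' x = -∫ x in a..b, u x ^ 2 := by
    rw [intervalIntegral.integral_mul_deriv_eq_deriv_mul_of_hasDerivAt (u' := u) (v := u)
      (by rwa [uIcc_of_le hab]) (by rwa [uIcc_of_le hab])
      (by rwa [min_eq_left hab, max_eq_right hab]) (by rwa [min_eq_left hab, max_eq_right hab])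
      (intervalIntegrable hu) (intervalIntegrable hu')]
    simp [hUa, hUb, sq]
  have square_nonneg : 0 ≤ ∫ x in a..b, (C * u' x + U x) ^ 2 :=
    intervalIntegral.integral_nonneg hab fun x _ ↦ sq_nonneg _
  have expand : ∫ x in a..b, (C * u' x + U x) ^ 2 =
      C ^ 2 * (∫ x in a..b, u' x ^ 2) + 2 * C * (∫ x in a..b, U x * u' x) +
        ∫ x in a..b, U x ^ 2 := by
    rw [← intervalIntegral.integral_const_mul, ← intervalIntegral.integral_const_mul,
      ← intervalIntegral.integral_add (intervalIntegrable (by fun_prop))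
        (intervalIntegrable (by fun_prop)),
      ← intervalIntegral.integral_add (intervalIntegrable (by fun_prop))
        (intervalIntegrable (by fun_prop))]
    congr with x
    ring
  refine le_of_mul_le_mul_left ?_ hC
  linear_combination square_nonneg + expand + 2 * C * by_parts + hCU

theorem integral_sq_le_integral_deriv_sq_of_integral_eq_zero (hab : a < b)
    (hu : ContinuousOn u (Icc a b)) (hu' : ContinuousOn u' (Icc a b))
    (huu' : ∀ x ∈ Ioo a b, HasDerivAt u (u' x) x) (hmean : ∫ x in a..b, u x = 0) :
    ∫ x in a..b, u x ^ 2 ≤ ((b - a) / Real.pi) ^ 2 * ∫ x in a..b, u' x ^ 2 := by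
  set U : ℝ → ℝ := fun x ↦ ∫ t in a..x, u t
  have hU : ContinuousOn U (Icc a b) := by
    rw [← uIcc_of_le hab.le] at hu ⊢
    exact intervalIntegral.continuousOn_primitive_interval (hu.integrableOn_compact isCompact_uIcc)
  have hUu : ∀ x ∈ Ioo a b, HasDerivAt U (u x) x := fun x hx ↦
    intervalIntegral.integral_hasDerivAt_right
      ((hu.mono (Icc_subset_Icc_right hx.2.le)).intervalIntegrable_of_Icc hx.1.le)
      ((hu.mono Ioo_subset_Icc_self).stronglyMeasurableAtFilter isOpen_Ioo x hx)
      (hu.continuousAt (Icc_mem_nhds hx.1 hx.2))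
  have hUa : U a = 0 := intervalIntegral.integral_same
  have hC : 0 < ((b - a) / Real.pi) ^ 2 := by
    have := sub_pos.2 hab
    positivity
  exact integral_sq_le_mul_integral_deriv_sq_of_primitive hab.le hC hU hu hu' hUu huu' hUa hmean
    (integral_sq_le_integral_deriv_sq_of_eq_zero hab hU hu hUu hUa hmean)

end Interval

section Prod

variable {X Y : Type*} [MeasurableSpace X] [MeasurableSpace Y] {μ : Measure X} {ν : Measure Y}
  {f : X × Y → ℝ}

theorem ae_memLp_two_prodMk [SFinite μ] [SFinite ν] (hf : MemLp f 2 (μ.prod ν)) :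
    ∀ᵐ x ∂μ, MemLp (fun y ↦ f (x, y)) 2 ν := by
  filter_upwards [hf.integrable_sq.prod_right_ae, hf.aestronglyMeasurable.prodMk_left]
    with x hsq hmeas
  exact (memLp_two_iff_integrable_sq hmeas).2 hsq

theorem ae_variance_prodMk_eq [SFinite μ] [IsProbabilityMeasure ν] (hf : MemLp f 2 (μ.prod ν)) :
    ∀ᵐ x ∂μ, Var[fun y ↦ f (x, y); ν] =
      (∫ y, f (x, y) ^ 2 ∂ν) - (∫ y, f (x, y) ∂ν) ^ 2 := by
  filter_upwards [ae_memLp_two_prodMk hf] with x hx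
  exact variance_eq_sub hx

theorem memLp_two_integral_prodMk [SFinite μ] [IsProbabilityMeasure ν]
    (hf : MemLp f 2 (μ.prod ν)) :
    MemLp (fun x ↦ ∫ y, f (x, y) ∂ν) 2 μ := by
  have hmeas := hf.aestronglyMeasurable.integral_prod_right'
  refine (memLp_two_iff_integrable_sq hmeas).2
    (hf.integrable_sq.integral_prod_left.mono' (hmeas.pow 2) ?_)
  filter_upwards [ae_variance_prodMk_eq hf] with x hx
  rw [Real.norm_of_nonneg (sq_nonneg _)]
  linarith [variance_nonneg (fun y ↦ f (x, y)) ν]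

variable [IsProbabilityMeasure μ] [IsProbabilityMeasure ν]

theorem variance_prod_eq (hf : MemLp f 2 (μ.prod ν)) :
    Var[f; μ.prod ν] =
      (∫ x, Var[fun y ↦ f (x, y); ν] ∂μ) + Var[fun x ↦ ∫ y, f (x, y) ∂ν; μ] := by
  have hg := memLp_two_integral_prodMk hf
  rw [integral_congr_ae (ae_variance_prodMk_eq hf),
    integral_sub hf.integrable_sq.integral_prod_left hg.integrable_sq,
    variance_eq_sub hf, variance_eq_sub hg, integral_prod f (hf.integrable one_le_two)]
  simp only [Pi.pow_apply]
  rw [integral_prod _ hf.integrable_sq]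
  ring

/- Centring each section `f (·, y)` changes the variance of the averaged function by nothing, and
the variance of the centred function is at most its second moment. -/
theorem variance_integral_le_integral_variance (hf : MemLp f 2 (μ.prod ν)) :
    Var[fun x ↦ ∫ y, f (x, y) ∂ν; μ] ≤ ∫ y, Var[fun x ↦ f (x, y); μ] ∂ν := by
  set h : Y → ℝ := fun y ↦ ∫ x, f (x, y) ∂μ
  have hh : MemLp h 2 ν :=
    memLp_two_integral_prodMk (hf.comp_measurePreserving Measure.measurePreserving_swap)
  have hF : MemLp (fun p ↦ f p - h p.2) 2 (μ.prod ν) := hf.sub (hh.comp_snd μ)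
  have centred : ∀ᵐ x ∂μ, ∫ y, (f (x, y) - h y) ∂ν = (∫ y, f (x, y) ∂ν) - ∫ y, h y ∂ν := by
    filter_upwards [ae_memLp_two_prodMk hf] with x hx
    exact integral_sub (hx.integrable one_le_two) (hh.integrable one_le_two)
  calc Var[fun x ↦ ∫ y, f (x, y) ∂ν; μ]
      = Var[fun x ↦ ∫ y, (f (x, y) - h y) ∂ν; μ] := by
        rw [variance_congr centred,
          variance_sub_const (memLp_two_integral_prodMk hf).aestronglyMeasurable]
    _ ≤ Var[fun p ↦ f p - h p.2; μ.prod ν] := by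
        rw [variance_prod_eq hF]
        exact le_add_of_nonneg_left (integral_nonneg fun x ↦ variance_nonneg _ _)
    _ ≤ ∫ p, (f p - h p.2) ^ 2 ∂μ.prod ν :=
        variance_le_expectation_sq hF.aestronglyMeasurable
    _ = ∫ y, ∫ x, (f (x, y) - h y) ^ 2 ∂μ ∂ν := integral_prod_symm _ hF.integrable_sq
    _ = ∫ y, Var[fun x ↦ f (x, y); μ] ∂ν := by
        refine integral_congr_ae ?_
        filter_upwards [hf.aestronglyMeasurable.prodMk_right] with y hy
        rw [variance_eq_integral hy.aemeasurable]

theorem variance_prod_le (hf : MemLp f 2 (μ.prod ν)) :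
    Var[f; μ.prod ν] ≤
      (∫ y, Var[fun x ↦ f (x, y); μ] ∂ν) + ∫ x, Var[fun y ↦ f (x, y); ν] ∂μ := by
  rw [variance_prod_eq hf, add_comm]
  gcongr
  exact variance_integral_le_integral_variance hf

theorem variance_prod_le_of_ae_variance_le {D₁ D₂ : X × Y → ℝ} (hf : MemLp f 2 (μ.prod ν))
    (hD₁ : Integrable D₁ (μ.prod ν)) (hD₂ : Integrable D₂ (μ.prod ν))
    (hfD₁ : ∀ᵐ y ∂ν, Var[fun x ↦ f (x, y); μ] ≤ ∫ x, D₁ (x, y) ∂μ)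
    (hfD₂ : ∀ᵐ x ∂μ, Var[fun y ↦ f (x, y); ν] ≤ ∫ y, D₂ (x, y) ∂ν) :
    Var[f; μ.prod ν] ≤ (∫ p, D₁ p ∂μ.prod ν) + ∫ p, D₂ p ∂μ.prod ν := by
  rw [integral_prod_symm D₁ hD₁, integral_prod D₂ hD₂]
  refine (variance_prod_le hf).trans (add_le_add ?_ ?_)
  · exact integral_mono_of_nonneg (ae_of_all _ fun y ↦ variance_nonneg _ _)
      hD₁.integral_prod_right hfD₁
  · exact integral_mono_of_nonneg (ae_of_all _ fun x ↦ variance_nonneg _ _)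
      hD₂.integral_prod_left hfD₂

end Prod

section Cond

variable {X Y : Type*} [MeasurableSpace X] [MeasurableSpace Y] {μ : Measure X} {ν : Measure Y}
  {E : Type*} [NormedAddCommGroup E] {s : Set X} {t : Set Y}

theorem integral_cond [NormedSpace ℝ E] {f : X → E} :
    ∫ x, f x ∂μ[|s] = (μ.real s)⁻¹ • ∫ x in s, f x ∂μ := by
  rw [ProbabilityTheory.cond, integral_smul_measure, ENNReal.toReal_inv, measureReal_def]

theorem variance_cond_le_integral_cond_iff {f g : X → ℝ} (hs₀ : μ s ≠ 0) (hs : μ s ≠ ⊤)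
    (hf : AEMeasurable f (μ[|s])) :
    Var[f; μ[|s]] ≤ ∫ x, g x ∂μ[|s] ↔
      ∫ x in s, (f x - ∫ x, f x ∂μ[|s]) ^ 2 ∂μ ≤ ∫ x in s, g x ∂μ := by
  have hs_inv : 0 < (μ.real s)⁻¹ := inv_pos.2 (ENNReal.toReal_pos hs₀ hs)
  rw [variance_eq_integral hf, integral_cond, integral_cond (f := g),
    smul_le_smul_iff_of_pos_left hs_inv]

theorem prod_cond_cond [SFinite μ] [SFinite ν] (hs : μ s ≠ ⊤) (ht : ν t ≠ ⊤) :
    (μ[|s]).prod (ν[|t]) = (μ.prod ν)[|s ×ˢ t] := by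
  simp only [ProbabilityTheory.cond]
  rw [Measure.prod_smul_left, Measure.prod_smul_right, Measure.prod_restrict, smul_smul,
    Measure.prod_prod, ENNReal.mul_inv (.inr ht) (.inl hs)]

theorem measurePreserving_cond {e : X → Y} (he : MeasurePreserving e μ ν) (ht : MeasurableSet t) :
    MeasurePreserving e (μ[|e ⁻¹' t]) (ν[|t]) := by
  rw [ProbabilityTheory.cond, ProbabilityTheory.cond, he.measure_preimage ht.nullMeasurableSet]
  exact (he.restrict_preimage ht).smul_measure _

theorem memLp_cond_of_continuousOn [TopologicalSpace X] [OpensMeasurableSpace X]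
    [SecondCountableTopologyEither X E] {K : Set X} {f : X → E} {p : ENNReal} (hK : IsCompact K)
    (hsK : s ⊆ K) (hs : MeasurableSet s) (hf : ContinuousOn f K) : MemLp f p (μ[|s]) := by
  obtain ⟨C, hC⟩ := hK.exists_bound_of_continuousOn hf
  exact .of_bound (((hf.mono hsK).aestronglyMeasurable hs).smul_measure _) C
    (ae_cond_of_forall_mem hs fun x hx ↦ hC x (hsK hx))

end Cond

section Rectangle

theorem isProbabilityMeasure_cond_Ioo {a b : ℝ} (hab : a < b) :
    IsProbabilityMeasure ((volume : Measure ℝ)[|Ioo a b]) :=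
  cond_isProbabilityMeasure_of_finite (by simpa using hab) (by simp)

theorem variance_cond_Ioo_le {a b : ℝ} {u u' : ℝ → ℝ} (hab : a < b)
    (hu : ContinuousOn u (Icc a b)) (hu' : ContinuousOn u' (Icc a b))
    (huu' : ∀ x ∈ Ioo a b, HasDerivAt u (u' x) x) :
    Var[u; volume[|Ioo a b]] ≤ ∫ x, ((b - a) / Real.pi) ^ 2 * u' x ^ 2 ∂volume[|Ioo a b] := by
  rw [variance_cond_le_integral_cond_iff (by simpa using hab) (by simp)
    (memLp_cond_of_continuousOn (p := 1) isCompact_Icc Ioo_subset_Icc_self measurableSet_Ioo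
      hu).aemeasurable]
  set m := ∫ x, u x ∂volume[|Ioo a b] with hm
  rw [integral_const_mul]
  simp only [← integral_Ioc_eq_integral_Ioo, ← intervalIntegral.integral_of_le hab.le] at hm ⊢
  refine integral_sq_le_integral_deriv_sq_of_integral_eq_zero hab (by fun_prop) hu'
    (fun x hx ↦ (huu' x hx).sub_const m) ?_
  rw [integral_cond, ← integral_Ioc_eq_integral_Ioo, ← intervalIntegral.integral_of_le hab.le,
    smul_eq_mul, Real.volume_real_Ioo_of_le hab.le] at hm
  rw [intervalIntegral.integral_sub (hu.intervalIntegrable_of_Icc hab.le)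
    intervalIntegrable_const, intervalIntegral.integral_const, smul_eq_mul, hm,
    mul_inv_cancel_left₀ (sub_pos.2 hab).ne', sub_self]

variable {a₁ b₁ a₂ b₂ : ℝ} {f f₁ f₂ : ℝ × ℝ → ℝ}

theorem variance_cond_Ioo_prod_Ioo_le (h₁ : a₁ < b₁) (h₂ : a₂ < b₂)
    (hf : ContinuousOn f (Icc a₁ b₁ ×ˢ Icc a₂ b₂))
    (hf₁ : ContinuousOn f₁ (Icc a₁ b₁ ×ˢ Icc a₂ b₂))
    (hf₂ : ContinuousOn f₂ (Icc a₁ b₁ ×ˢ Icc a₂ b₂))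
    (hff₁ : ∀ x ∈ Ioo a₁ b₁, ∀ y ∈ Ioo a₂ b₂, HasDerivAt (fun x ↦ f (x, y)) (f₁ (x, y)) x)
    (hff₂ : ∀ x ∈ Ioo a₁ b₁, ∀ y ∈ Ioo a₂ b₂, HasDerivAt (fun y ↦ f (x, y)) (f₂ (x, y)) y) :
    Var[f; volume[|Ioo a₁ b₁ ×ˢ Ioo a₂ b₂]] ≤
      ∫ p, (((b₁ - a₁) / Real.pi) ^ 2 * f₁ p ^ 2 + ((b₂ - a₂) / Real.pi) ^ 2 * f₂ p ^ 2)
        ∂volume[|Ioo a₁ b₁ ×ˢ Ioo a₂ b₂] := by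
  have := isProbabilityMeasure_cond_Ioo h₁
  have := isProbabilityMeasure_cond_Ioo h₂
  have memLp {g : ℝ × ℝ → ℝ} (hg : ContinuousOn g (Icc a₁ b₁ ×ˢ Icc a₂ b₂)) :
      MemLp g 2 (volume[|Ioo a₁ b₁ ×ˢ Ioo a₂ b₂]) :=
    memLp_cond_of_continuousOn (isCompact_Icc.prod isCompact_Icc)
      (prod_mono Ioo_subset_Icc_self Ioo_subset_Icc_self)
      (measurableSet_Ioo.prod measurableSet_Ioo) hg
  have hD₁ := (memLp hf₁).integrable_sq.const_mul (((b₁ - a₁) / Real.pi) ^ 2)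
  have hD₂ := (memLp hf₂).integrable_sq.const_mul (((b₂ - a₂) / Real.pi) ^ 2)
  have hf_memLp := memLp hf
  rw [integral_add hD₁ hD₂]
  rw [Measure.volume_eq_prod, ← prod_cond_cond (by simp) (by simp)] at hf_memLp hD₁ hD₂ ⊢
  refine variance_prod_le_of_ae_variance_le hf_memLp hD₁ hD₂ ?_ ?_
  · refine ae_cond_of_forall_mem measurableSet_Ioo fun y hy ↦ ?_
    have hmaps : MapsTo (fun x ↦ (x, y)) (Icc a₁ b₁) (Icc a₁ b₁ ×ˢ Icc a₂ b₂) := fun x hx ↦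
      ⟨hx, Ioo_subset_Icc_self hy⟩
    exact variance_cond_Ioo_le h₁ (hf.comp (by fun_prop) hmaps) (hf₁.comp (by fun_prop) hmaps)
      fun x hx ↦ hff₁ x hx y hy
  · refine ae_cond_of_forall_mem measurableSet_Ioo fun x hx ↦ ?_
    have hmaps : MapsTo (fun y ↦ (x, y)) (Icc a₂ b₂) (Icc a₁ b₁ ×ˢ Icc a₂ b₂) := fun y hy ↦
      ⟨Ioo_subset_Icc_self hx, hy⟩
    exact variance_cond_Ioo_le h₂ (hf.comp (by fun_prop) hmaps) (hf₂.comp (by fun_prop) hmaps)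
      fun y hy ↦ hff₂ x hx y hy

end Rectangle

section Plane

local notation "ℝ²" => EuclideanSpace ℝ (Fin 2)

theorem measurePreserving_toLp_pair :
    MeasurePreserving (fun p : ℝ × ℝ ↦ (!₂[p.1, p.2] : ℝ²)) :=
  (PiLp.volume_preserving_toLp (Fin 2)).comp ((volume_preserving_finTwoArrow ℝ).symm _)

theorem measurableEmbedding_toLp_pair :
    MeasurableEmbedding (fun p : ℝ × ℝ ↦ (!₂[p.1, p.2] : ℝ²)) :=
  (MeasurableEquiv.toLp 2 (Fin 2 → ℝ)).measurableEmbedding.comp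
    (MeasurableEquiv.finTwoArrow (α := ℝ)).symm.measurableEmbedding

theorem hasDerivAt_toLp_pair_left (x y : ℝ) :
    HasDerivAt (fun x ↦ (!₂[x, y] : ℝ²)) (EuclideanSpace.single 0 1) x := by
  have hpair : HasDerivAt (fun x ↦ ![x, y]) (Pi.single 0 1) x := by
    simpa [hasDerivAt_pi, Fin.forall_fin_two, hasDerivAt_const] using hasDerivAt_id' x
  exact (PiLp.hasFDerivAt_toLp 2 ![x, y]).comp_hasDerivAt x hpair

theorem hasDerivAt_toLp_pair_right (x y : ℝ) :
    HasDerivAt (fun y ↦ (!₂[x, y] : ℝ²)) (EuclideanSpace.single 1 1) y := by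
  have hpair : HasDerivAt (fun y ↦ ![x, y]) (Pi.single 1 1) y := by
    simpa [hasDerivAt_pi, Fin.forall_fin_two, hasDerivAt_const] using hasDerivAt_id' y
  exact (PiLp.hasFDerivAt_toLp 2 ![x, y]).comp_hasDerivAt y hpair

theorem measurableSet_rect (L₁ L₂ : ℝ) : MeasurableSet (rect L₁ L₂) := by
  unfold rect
  measurability

theorem toLp_pair_preimage_rect (L₁ L₂ : ℝ) :
    (fun p : ℝ × ℝ ↦ (!₂[p.1, p.2] : ℝ²)) ⁻¹' rect L₁ L₂ = Ioo 0 L₁ ×ˢ Ioo 0 L₂ := by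
  ext p
  simp [rect]

theorem volume_rect (L₁ L₂ : ℝ) :
    volume (rect L₁ L₂) = ENNReal.ofReal L₁ * ENNReal.ofReal L₂ := by
  rw [← measurePreserving_toLp_pair.measure_preimage (measurableSet_rect L₁ L₂).nullMeasurableSet,
    toLp_pair_preimage_rect, Measure.volume_eq_prod, Measure.prod_prod]
  simp

theorem isCompact_closure_rect (L₁ L₂ : ℝ) : IsCompact (closure (rect L₁ L₂)) := by
  have hK : IsCompact ((fun p : ℝ × ℝ ↦ (!₂[p.1, p.2] : ℝ²)) '' (Icc 0 L₁ ×ˢ Icc 0 L₂)) :=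
    (isCompact_Icc.prod isCompact_Icc).image (by fun_prop)
  refine hK.closure_of_subset fun x hx ↦ ⟨(x 0, x 1),
    ⟨Ioo_subset_Icc_self hx.1, Ioo_subset_Icc_self hx.2⟩, ?_⟩
  ext i
  fin_cases i <;> rfl

theorem mapsTo_toLp_pair_closure_rect {L₁ L₂ : ℝ} (hL₁ : 0 < L₁) (hL₂ : 0 < L₂) :
    MapsTo (fun p : ℝ × ℝ ↦ (!₂[p.1, p.2] : ℝ²)) (Icc 0 L₁ ×ˢ Icc 0 L₂)
      (closure (rect L₁ L₂)) := by
  rw [← closure_Ioo hL₁.ne, ← closure_Ioo hL₂.ne, ← closure_prod_eq, ← toLp_pair_preimage_rect]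
  exact (mapsTo_preimage _ _).closure (by fun_prop)

theorem norm_sq_dual_eq_add_sq_single (l : ℝ² →L[ℝ] ℝ) :
    ‖l‖ ^ 2 = l (EuclideanSpace.single 0 1) ^ 2 + l (EuclideanSpace.single 1 1) ^ 2 := by
  simpa using (EuclideanSpace.basisFun (Fin 2) ℝ).norm_dual l

variable {L₁ L₂ : ℝ} {f : ℝ² → ℝ} {f' : ℝ² → ℝ² →L[ℝ] ℝ}

theorem memLp_cond_rect {g : ℝ² → ℝ} {p : ENNReal}
    (hg : ContinuousOn g (closure (rect L₁ L₂))) : MemLp g p (volume[|rect L₁ L₂]) :=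
  memLp_cond_of_continuousOn (isCompact_closure_rect L₁ L₂) subset_closure
    (measurableSet_rect L₁ L₂) hg

theorem variance_cond_rect_le (hL₁ : 0 < L₁) (hL₂ : 0 < L₂)
    (hf : ContinuousOn f (closure (rect L₁ L₂))) (hf' : ContinuousOn f' (closure (rect L₁ L₂)))
    (hff' : ∀ x ∈ rect L₁ L₂, HasFDerivAt f (f' x) x) :
    Var[f; volume[|rect L₁ L₂]] ≤
      ∫ x, ((L₁ / Real.pi) ^ 2 * f' x (EuclideanSpace.single 0 1) ^ 2 +
        (L₂ / Real.pi) ^ 2 * f' x (EuclideanSpace.single 1 1) ^ 2) ∂volume[|rect L₁ L₂] := by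
  have hpair := measurePreserving_cond measurePreserving_toLp_pair (measurableSet_rect L₁ L₂)
  have hcont : ContinuousOn (fun p : ℝ × ℝ ↦ (!₂[p.1, p.2] : ℝ²)) (Icc 0 L₁ ×ˢ Icc 0 L₂) := by
    fun_prop
  have hmaps := mapsTo_toLp_pair_closure_rect hL₁ hL₂
  have hmem {x y : ℝ} (hx : x ∈ Ioo 0 L₁) (hy : y ∈ Ioo 0 L₂) : !₂[x, y] ∈ rect L₁ L₂ := ⟨hx, hy⟩
  have haemeas := (memLp_cond_rect (p := 1) hf).aemeasurable
  rw [← hpair.variance_fun_comp haemeas, ← hpair.integral_comp measurableEmbedding_toLp_pair,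
    toLp_pair_preimage_rect]
  have hbox := variance_cond_Ioo_prod_Ioo_le hL₁ hL₂ (hf.comp hcont hmaps)
    ((hf'.comp hcont hmaps).clm_apply continuousOn_const)
    ((hf'.comp hcont hmaps).clm_apply continuousOn_const)
    (fun x hx y hy ↦ (hff' _ (hmem hx hy)).comp_hasDerivAt x (hasDerivAt_toLp_pair_left x y))
    (fun x hx y hy ↦ (hff' _ (hmem hx hy)).comp_hasDerivAt y (hasDerivAt_toLp_pair_right x y))
  simpa only [sub_zero, Function.comp_def] using hbox

theorem variance_cond_rect_le_integral_norm_sq (hL₁ : 0 < L₁) (hL₂ : 0 < L₂)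
    (hf : ContinuousOn f (closure (rect L₁ L₂))) (hf' : ContinuousOn f' (closure (rect L₁ L₂)))
    (hff' : ∀ x ∈ rect L₁ L₂, HasFDerivAt f (f' x) x) :
    Var[f; volume[|rect L₁ L₂]] ≤
      ∫ x, (max L₁ L₂ / Real.pi) ^ 2 * ‖f' x‖ ^ 2 ∂volume[|rect L₁ L₂] := by
  have hnorm := memLp_cond_rect (p := 2) hf'.norm
  refine (variance_cond_rect_le hL₁ hL₂ hf hf' hff').trans
    (integral_mono_of_nonneg (ae_of_all _ fun x ↦ by positivity)
      (hnorm.integrable_sq.const_mul _) (ae_of_all _ fun x ↦ ?_))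
  simp only [norm_sq_dual_eq_add_sq_single, mul_add]
  gcongr
  exacts [le_max_left L₁ L₂, le_max_right L₁ L₂]

theorem stmt_15_general (hL₁ : 0 < L₁) (hL₂ : 0 < L₂)
    (hf : ContinuousOn f (closure (rect L₁ L₂))) (hf' : ContinuousOn f' (closure (rect L₁ L₂)))
    (hff' : ∀ x ∈ rect L₁ L₂, HasFDerivAt f (f' x) x) (hmean : ∫ x in rect L₁ L₂, f x = 0) :
    ∫ x in rect L₁ L₂, f x ^ 2 ≤
      (max L₁ L₂ / Real.pi) ^ 2 * ∫ x in rect L₁ L₂, ‖f' x‖ ^ 2 := by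
  have hvol₀ : volume (rect L₁ L₂) ≠ 0 := by simp [volume_rect, hL₁, hL₂]
  have hvol : volume (rect L₁ L₂) ≠ ⊤ := by
    rw [volume_rect]
    finiteness
  have haemeas := (memLp_cond_rect (p := 1) hf).aemeasurable
  have hvar := (variance_cond_le_integral_cond_iff hvol₀ hvol haemeas).1
    (variance_cond_rect_le_integral_norm_sq hL₁ hL₂ hf hf' hff')
  simpa only [integral_cond, hmean, smul_zero, sub_zero, integral_const_mul] using hvar

end Plane

/-- Poincaré–Wirtinger inequality with the optimal constant `max(L₁, L₂)/π` for mean-zero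
`C¹` functions on the rectangle `Ω = (0, L₁) × (0, L₂)`. -/
theorem stmt_15 (L₁ L₂ : ℝ) (hL₁ : 0 < L₁) (hL₂ : 0 < L₂) :
    ∀ f : EuclideanSpace ℝ (Fin 2) → ℝ, ContDiff ℝ 1 f →
      (∫ x in rect L₁ L₂, f x) = 0 →
      (∫ x in rect L₁ L₂, f x ^ 2) ≤
        (max L₁ L₂ / Real.pi) ^ 2 * ∫ x in rect L₁ L₂, ‖fderiv ℝ f x‖ ^ 2 :=
  fun _ hf ↦ stmt_15_general hL₁ hL₂ hf.continuous.continuousOn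
    (hf.continuous_fderiv one_ne_zero).continuousOn
    fun x _ ↦ (hf.differentiable one_ne_zero x).hasFDerivAt
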